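/- Let n ≥ 4, d ≥ 1, and let H¹,...,Hᵈ be hermitian n × n complex matrices such that for every ξ ∈ ℝᵈ \ {0} the hermitian matrix ∑_{ℓ=1}^d ξ_ℓ Hℓ has at least 2 positive eigenvalues and at least 2 negative eigenvalues. On ℂⁿ × ℝᵈ consider the vector fields L̄_j = ∂/∂z̄_j − i ∑_{ℓ=1}^d ∑_{k=1}^n (Hℓ)_{kj} z_k ∂/∂x_ℓ, j = 1,...,n. If u : ℂⁿ × ℝᵈ → ℂ is a smooth compactly supported function satisfying L̄_j u = 0 for all j = 1,...,n, then u ≡ 0. -/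

import Mathlib

open MeasureTheory Complex Finset

noncomputable section

/-- Wirtinger derivative `∂u/∂z̄_j` in the `z` variables on `ℂⁿ × ℝᵈ`. -/
def wbarQ {n d : ℕ} (j : Fin n) (u : (Fin n → ℂ) × (Fin d → ℝ) → ℂ)
    (p : (Fin n → ℂ) × (Fin d → ℝ)) : ℂ :=
  (1 / 2 : ℂ) * (fderiv ℝ u p (Pi.single j 1, 0)
    + Complex.I * fderiv ℝ u p (Pi.single j Complex.I, 0))

/-- Wirtinger derivative `∂u/∂z_j` in the `z` variables on `ℂⁿ × ℝᵈ`. -/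
def wholQ {n d : ℕ} (j : Fin n) (u : (Fin n → ℂ) × (Fin d → ℝ) → ℂ)
    (p : (Fin n → ℂ) × (Fin d → ℝ)) : ℂ :=
  (1 / 2 : ℂ) * (fderiv ℝ u p (Pi.single j 1, 0)
    - Complex.I * fderiv ℝ u p (Pi.single j Complex.I, 0))

/-- The derivative `∂u/∂x_ℓ` in the real variables on `ℂⁿ × ℝᵈ`. -/
def dxQ {n d : ℕ} (ℓ : Fin d) (u : (Fin n → ℂ) × (Fin d → ℝ) → ℂ)
    (p : (Fin n → ℂ) × (Fin d → ℝ)) : ℂ :=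
  fderiv ℝ u p (0, Pi.single ℓ 1)

/-- The vector field `L̄_j = ∂/∂z̄_j − i ∑_ℓ ∑_k (Hℓ)_{kj} z_k ∂/∂x_ℓ`. -/
def LbarQ {n d : ℕ} (H : Fin d → Matrix (Fin n) (Fin n) ℂ) (j : Fin n)
    (u : (Fin n → ℂ) × (Fin d → ℝ) → ℂ) (p : (Fin n → ℂ) × (Fin d → ℝ)) : ℂ :=
  wbarQ j u p - Complex.I * ∑ ℓ, ∑ k, H ℓ k j * p.1 k * dxQ ℓ u p

/-- The vector field `L_j = ∂/∂z_j + i ∑_ℓ ∑_k (Hℓ)_{jk} z̄_k ∂/∂x_ℓ`. -/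
def LholQ {n d : ℕ} (H : Fin d → Matrix (Fin n) (Fin n) ℂ) (j : Fin n)
    (u : (Fin n → ℂ) × (Fin d → ℝ) → ℂ) (p : (Fin n → ℂ) × (Fin d → ℝ)) : ℂ :=
  wholQ j u p + Complex.I * ∑ ℓ, ∑ k, H ℓ j k * (starRingEnd ℂ) (p.1 k) * dxQ ℓ u p

/-- The weight `e^{|z|²}`. -/
def wgtQ {n d : ℕ} (p : (Fin n → ℂ) × (Fin d → ℝ)) : ℝ :=
  Real.exp (∑ j, Complex.normSq (p.1 j))

/-- `M` is 2-pseudoconcave: for every `ξ ≠ 0`, the hermitian matrix `∑ ℓ, ξ_ℓ Hℓ`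
has at least 2 positive and at least 2 negative eigenvalues (with multiplicity). -/
def TwoPseudoconcave {n d : ℕ} (H : Fin d → Matrix (Fin n) (Fin n) ℂ) : Prop :=
  ∀ ξ : Fin d → ℝ, ξ ≠ 0 →
    ∀ h : (∑ ℓ, ((ξ ℓ : ℂ)) • H ℓ).IsHermitian,
      2 ≤ (Finset.univ.filter fun i => 0 < h.eigenvalues i).card ∧
      2 ≤ (Finset.univ.filter fun i => h.eigenvalues i < 0).card

/-! The equation `L̄_j u = 0` only involves the complex line through a point in the direction `e_j`
and the variables `x`, and there it reads `∂u/∂w̄ = ∑_ℓ a_ℓ(w) ∂u/∂x_ℓ` with `a_ℓ` holomorphic. The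
Fourier transform in `x` turns `∂/∂x_ℓ` into multiplication by `2πi ξ_ℓ`, so `f = û(·, ξ)` solves
`∂̄f = (∂̄b) f` on `ℂ` with `b = 2πi ∑_ℓ ξ_ℓ a_ℓ(w) w̄`. Then `e^{-b} f` is entire with compact
support, hence zero, and Fourier inversion gives `u = 0`. -/

open scoped FourierTransform RealInnerProductSpace

section Dbar

variable {F : Type*} [NormedAddCommGroup F] [NormedSpace ℂ F]

/-- The Cauchy–Riemann operator `∂̄ = ∂/∂w̄ = (∂/∂s + i ∂/∂t) / 2`, `w = s + i t`, on functions of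
one complex variable. It takes a junk value where `f` is not real differentiable. -/
def dbar (f : ℂ → F) (w : ℂ) : F :=
  (1 / 2 : ℂ) • (fderiv ℝ f w 1 + I • fderiv ℝ f w I)

theorem differentiableAt_complex_iff_dbar_eq_zero {f : ℂ → F} {w : ℂ} :
    DifferentiableAt ℂ f w ↔ DifferentiableAt ℝ f w ∧ dbar f w = 0 := by
  rw [differentiableAt_complex_iff_differentiableAt_real]
  refine and_congr_right fun _ ↦ ?_
  have hI : fderiv ℝ f w 1 + I • fderiv ℝ f w I
      = I • (fderiv ℝ f w I - I • fderiv ℝ f w 1) := by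
    rw [smul_sub, smul_smul, I_mul_I, neg_one_smul, sub_neg_eq_add, add_comm]
  rw [dbar, hI, smul_smul, smul_eq_zero_iff_right (by simp), sub_eq_zero]

theorem dbar_smul {c : ℂ → ℂ} {f : ℂ → F} {w : ℂ} (hc : DifferentiableAt ℝ c w)
    (hf : DifferentiableAt ℝ f w) :
    dbar (fun w ↦ c w • f w) w = c w • dbar f w + dbar c w • f w := by
  simp only [dbar, fderiv_fun_smul hc hf, add_apply, smul_apply,
    ContinuousLinearMap.smulRight_apply, smul_eq_mul]
  module

theorem dbar_cexp {b : ℂ → ℂ} {w : ℂ} (hb : DifferentiableAt ℝ b w) :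
    dbar (fun w ↦ exp (b w)) w = exp (b w) * dbar b w := by
  simp only [dbar, hb.hasFDerivAt.cexp.fderiv, smul_apply, smul_eq_mul]
  ring

theorem dbar_neg (f : ℂ → F) (w : ℂ) : dbar (fun w ↦ -f w) w = -dbar f w := by
  simp only [dbar, fderiv_fun_neg, neg_apply]
  module

theorem dbar_sum_const_mul {ι : Type*} [Fintype ι] (c : ι → ℂ) {φ : ι → ℂ → ℂ} {w : ℂ}
    (hφ : ∀ i, DifferentiableAt ℝ (φ i) w) :
    dbar (fun w ↦ ∑ i, c i * φ i w) w = ∑ i, c i * dbar (φ i) w := by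
  have hsum : HasFDerivAt (fun w ↦ ∑ i, c i * φ i w) (∑ i, c i • fderiv ℝ (φ i) w) w :=
    .fun_sum fun i _ ↦ (hφ i).hasFDerivAt.const_mul (c i)
  simp only [dbar, hsum.fderiv, _root_.sum_apply, smul_apply, smul_eq_mul, mul_sum,
    ← sum_add_distrib]
  exact sum_congr rfl fun i _ ↦ by ring

theorem dbar_conj (w : ℂ) : dbar (starRingEnd ℂ) w = 1 := by
  have hconj : fderiv ℝ (starRingEnd ℂ) w = conjCLE := conjCLE.fderiv
  simp only [dbar, hconj, ContinuousLinearEquiv.coe_coe, conjCLE_apply, map_one, conj_I,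
    smul_eq_mul, mul_neg, I_mul_I]
  norm_num

theorem dbar_mul_conj {a : ℂ → ℂ} {w : ℂ} (ha : DifferentiableAt ℂ a w) :
    dbar (fun w ↦ a w * starRingEnd ℂ w) w = a w := by
  obtain ⟨ha_real, ha_dbar⟩ := differentiableAt_complex_iff_dbar_eq_zero.1 ha
  have hconj : DifferentiableAt ℝ (starRingEnd ℂ) w := conjCLE.differentiableAt
  simpa only [smul_eq_mul, ha_dbar, dbar_conj, mul_one, zero_mul, add_zero]
    using dbar_smul ha_real hconj

theorem eq_zero_of_differentiable_of_hasCompactSupport {E : Type*} [NormedAddCommGroup E]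
    [NormedSpace ℂ E] [Nontrivial E] {f : E → F} (hf : Differentiable ℂ f)
    (hc : HasCompactSupport f) : f = 0 :=
  funext fun w ↦ hf.apply_eq_of_tendsto_cocompact w hc.is_zero_at_infty

theorem eq_zero_of_dbar_eq_dbar_smul {f : ℂ → F} {b : ℂ → ℂ} (hf : Differentiable ℝ f)
    (hc : HasCompactSupport f) (hb : Differentiable ℝ b)
    (h : ∀ w, dbar f w = dbar b w • f w) : f = 0 := by
  have hexp : Differentiable ℝ fun w ↦ exp (-b w) := hb.neg.cexp
  have hholo : Differentiable ℂ fun w ↦ exp (-b w) • f w := fun w ↦ by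
    refine differentiableAt_complex_iff_dbar_eq_zero.2 ⟨(hexp w).smul (hf w), ?_⟩
    rw [dbar_smul (hexp w) (hf w), dbar_cexp (hb w).fun_neg, dbar_neg, h]
    module
  have hzero := eq_zero_of_differentiable_of_hasCompactSupport hholo hc.smul_left
  exact funext fun w ↦ (smul_eq_zero_iff_right (exp_ne_zero _)).1 (congrFun hzero w)

end Dbar

section Slices

variable {X Y F : Type*} [TopologicalSpace X] [TopologicalSpace Y]

theorem apply_eq_zero_of_notMem_snd_tsupport [Zero F] {g : X × Y → F} {y : Y}
    (hy : y ∉ Prod.snd '' tsupport g) (x : X) : g (x, y) = 0 :=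
  image_eq_zero_of_notMem_tsupport fun h ↦ hy ⟨_, h, rfl⟩

theorem hasCompactSupport_slice_right [Zero F] [R1Space Y] {g : X × Y → F}
    (hc : HasCompactSupport g) (x : X) : HasCompactSupport fun y ↦ g (x, y) :=
  .intro (hc.isCompact.image continuous_snd) fun _ hy ↦ apply_eq_zero_of_notMem_snd_tsupport hy x

theorem exists_integrable_bound_of_hasCompactSupport [NormedAddCommGroup F] [MeasurableSpace Y]
    [T2Space Y] [OpensMeasurableSpace Y] (μ : Measure Y) [IsFiniteMeasureOnCompacts μ]
    {g : X × Y → F} (hg : Continuous g) (hc : HasCompactSupport g) :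
    ∃ bound : Y → ℝ, Integrable bound μ ∧ ∀ x y, ‖g (x, y)‖ ≤ bound y := by
  obtain ⟨C, hC⟩ := hg.bounded_above_of_compact_support hc
  have hK : IsCompact (Prod.snd '' tsupport g) := hc.isCompact.image continuous_snd
  refine ⟨(Prod.snd '' tsupport g).indicator fun _ ↦ C,
    (integrable_indicator_iff hK.measurableSet).2 (integrableOn_const hK.measure_lt_top.ne),
    fun x y ↦ ?_⟩
  by_cases hy : y ∈ Prod.snd '' tsupport g
  · simpa only [Set.indicator_of_mem hy] using hC (x, y)
  · simp only [Set.indicator_of_notMem hy, apply_eq_zero_of_notMem_snd_tsupport hy x, norm_zero,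
      le_refl]

theorem integrable_slice_right [NormedAddCommGroup F] [R1Space Y] [MeasurableSpace Y]
    [OpensMeasurableSpace Y] {μ : Measure Y} [IsFiniteMeasureOnCompacts μ]
    {g : X × Y → F} (hg : Continuous g) (hc : HasCompactSupport g) (x : X) :
    Integrable (fun y ↦ g (x, y)) μ :=
  (hg.comp (.prodMk_right x)).integrable_of_hasCompactSupport (hasCompactSupport_slice_right hc x)

end Slices

section PartialDerivative

variable {E V F : Type*} [NormedAddCommGroup E] [NormedSpace ℝ E] [NormedAddCommGroup V]
  [NormedSpace ℝ V] [NormedAddCommGroup F] [NormedSpace ℝ F] {g : E × V → F}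

theorem fderiv_slice_left (hg : Differentiable ℝ g) (w : E) (x : V) :
    fderiv ℝ (fun w ↦ g (w, x)) w = (fderiv ℝ g (w, x)).comp (.inl ℝ E V) :=
  ((hg (w, x)).hasFDerivAt.comp w (hasFDerivAt_prodMk_left w x)).fderiv

theorem continuous_fderiv_slice_left (hg : ContDiff ℝ 1 g) :
    Continuous fun p : E × V ↦ fderiv ℝ (fun w ↦ g (w, p.2)) p.1 := by
  simp only [fderiv_slice_left (hg.differentiable one_ne_zero)]
  exact (hg.continuous_fderiv one_ne_zero).clm_comp continuous_const

theorem hasCompactSupport_fderiv_slice_left (hg : Differentiable ℝ g) (hc : HasCompactSupport g) :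
    HasCompactSupport fun p : E × V ↦ fderiv ℝ (fun w ↦ g (w, p.2)) p.1 := by
  simp only [fderiv_slice_left hg]
  exact (hc.fderiv ℝ).comp_left (g := fun L : E × V →L[ℝ] F ↦ L.comp (.inl ℝ E V))
    (ContinuousLinearMap.zero_comp _)

end PartialDerivative

section PartialFourier

variable {X V F : Type*} [NormedAddCommGroup V] [InnerProductSpace ℝ V] [FiniteDimensional ℝ V]
  [MeasurableSpace V] [BorelSpace V] [NormedAddCommGroup F] [NormedSpace ℂ F]

theorem fourier_sum_const_smul {ι : Type*} [Fintype ι] (a : ι → ℂ) {f : ι → V → F}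
    (hf : ∀ i, Integrable (f i)) (ξ : V) :
    𝓕 (fun x ↦ ∑ i, a i • f i x) ξ = ∑ i, a i • 𝓕 (f i) ξ := by
  simp only [Real.fourier_eq, smul_sum, smul_comm _ (a _)]
  rw [integral_finsetSum _ fun i _ ↦
    ((Real.fourierIntegral_convergent_iff ξ).2 (hf i)).fun_smul (a i)]
  simp only [integral_smul]

theorem fourier_fderiv_apply {f : V → F} (hf : Integrable f) (hf_diff : Differentiable ℝ f)
    (hf' : Integrable (fderiv ℝ f)) (ξ v : V) :
    𝓕 (fun x ↦ fderiv ℝ f x v) ξ = (2 * Real.pi * I * ⟪v, ξ⟫) • 𝓕 f ξ := by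
  rw [← Real.fourier_continuousLinearMap_apply hf', Real.fourier_fderiv hf hf_diff hf']
  simp [VectorFourier.fourierSMulRight_apply, innerSL_apply_apply ℝ, real_inner_comm, mul_smul]

/-- The Fourier transform of `g` in its second variable, as a function of the first one at a fixed
frequency `ξ`. -/
def partialFourier (g : X × V → F) (ξ : V) (w : X) : F :=
  𝓕 (fun x ↦ g (w, x)) ξ

theorem hasCompactSupport_partialFourier [TopologicalSpace X] [R1Space X] {g : X × V → F}
    (hc : HasCompactSupport g) (ξ : V) : HasCompactSupport (partialFourier g ξ) := by
  refine .intro (hc.isCompact.image continuous_fst) fun w hw ↦ ?_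
  have hzero : (fun x ↦ g (w, x)) = 0 :=
    funext fun x ↦ image_eq_zero_of_notMem_tsupport fun h ↦ hw ⟨_, h, rfl⟩
  simp [partialFourier, hzero, Real.fourier_eq]

theorem eq_zero_of_partialFourier_eq_zero [CompleteSpace F] [TopologicalSpace X] {g : X × V → F}
    (hg : Continuous g) (hc : HasCompactSupport g) (h : ∀ ξ, partialFourier g ξ = 0) : g = 0 := by
  funext ⟨w, x⟩
  have hcont : Continuous fun x ↦ g (w, x) := hg.comp (.prodMk_right w)
  have hfourier : 𝓕 (fun x ↦ g (w, x)) = 0 := funext fun ξ ↦ congrFun (h ξ) w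
  have hinv := hcont.fourierInv_fourier_eq (integrable_slice_right hg hc w)
    (by rw [hfourier]; exact integrable_zero _ _ _)
  rw [hfourier] at hinv
  simpa [Real.fourierInv_eq] using (congrFun hinv x).symm

theorem hasFDerivAt_partialFourier {E : Type*} [NormedAddCommGroup E] [NormedSpace ℝ E]
    {g : E × V → F} (hg : ContDiff ℝ 1 g) (hc : HasCompactSupport g) (ξ : V) (w : E) :
    HasFDerivAt (partialFourier g ξ) (𝓕 (fun x ↦ fderiv ℝ (fun w ↦ g (w, x)) w) ξ) w := by
  have hdiff : Differentiable ℝ g := hg.differentiable one_ne_zero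
  have hD_cont := continuous_fderiv_slice_left hg
  have hD_supp := hasCompactSupport_fderiv_slice_left hdiff hc
  obtain ⟨bound, hbound_int, hbound⟩ :=
    exists_integrable_bound_of_hasCompactSupport (volume : Measure V) hD_cont hD_supp
  have hint (w : E) : Integrable fun x ↦ Real.fourierChar (-⟪x, ξ⟫) • g (w, x) :=
    (Real.fourierIntegral_convergent_iff ξ).2 (integrable_slice_right hdiff.continuous hc w)
  have hDint : Integrable fun x ↦
      Real.fourierChar (-⟪x, ξ⟫) • fderiv ℝ (fun w ↦ g (w, x)) w :=
    (Real.fourierIntegral_convergent_iff ξ).2 (integrable_slice_right hD_cont hD_supp w)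
  refine hasFDerivAt_integral_of_dominated_of_fderiv_le
    (F' := fun w x ↦ Real.fourierChar (-⟪x, ξ⟫) • fderiv ℝ (fun w ↦ g (w, x)) w)
    Filter.univ_mem (.of_forall fun w ↦ (hint w).aestronglyMeasurable) (hint w)
    hDint.aestronglyMeasurable (.of_forall fun x w _ ↦ ?_) hbound_int (.of_forall fun x w _ ↦ ?_)
  · exact (Circle.norm_smul _ _).trans_le (hbound w x)
  · have hslice : DifferentiableAt ℝ (fun w ↦ g (w, x)) w := by fun_prop
    exact hslice.hasFDerivAt.const_smul (Real.fourierChar (-⟪x, ξ⟫))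

theorem dbar_partialFourier {g : ℂ × V → F} (hg : ContDiff ℝ 1 g) (hc : HasCompactSupport g)
    (ξ : V) (w : ℂ) :
    dbar (partialFourier g ξ) w = 𝓕 (fun x ↦ dbar (fun w ↦ g (w, x)) w) ξ := by
  have hDint : Integrable fun x ↦ fderiv ℝ (fun w ↦ g (w, x)) w :=
    integrable_slice_right (continuous_fderiv_slice_left hg)
      (hasCompactSupport_fderiv_slice_left (hg.differentiable one_ne_zero) hc) w
  have hint (v : ℂ) : Integrable fun x ↦
      Real.fourierChar (-⟪x, ξ⟫) • fderiv ℝ (fun w ↦ g (w, x)) w v :=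
    (Real.fourierIntegral_convergent_iff ξ).2 (hDint.apply_continuousLinearMap v)
  rw [dbar, (hasFDerivAt_partialFourier hg hc ξ w).fderiv,
    Real.fourier_continuousLinearMap_apply hDint, Real.fourier_continuousLinearMap_apply hDint]
  simp only [Real.fourier_eq, dbar]
  rw [← integral_smul I, ← integral_add (hint 1) ((hint I).fun_smul I), ← integral_smul]
  simp only [smul_add, smul_comm (Real.fourierChar _)]

theorem eq_zero_of_dbar_eq_sum_smul_fderiv [CompleteSpace F] {ι : Type*} [Fintype ι]
    {g : ℂ × V → F} (hg : ContDiff ℝ 1 g) (hc : HasCompactSupport g) {φ : ι → ℂ → ℂ}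
    (hφ : ∀ i, Differentiable ℝ (φ i)) (e : ι → V)
    (h : ∀ w x, dbar (fun w ↦ g (w, x)) w
      = ∑ i, dbar (φ i) w • fderiv ℝ (fun x ↦ g (w, x)) x (e i)) : g = 0 := by
  refine eq_zero_of_partialFourier_eq_zero hg.continuous hc fun ξ ↦ ?_
  refine eq_zero_of_dbar_eq_dbar_smul
    (b := fun w ↦ ∑ i, 2 * Real.pi * I * ⟪e i, ξ⟫ * φ i w)
    (fun w ↦ (hasFDerivAt_partialFourier hg hc ξ w).differentiableAt)
    (hasCompactSupport_partialFourier hc ξ) (by fun_prop) fun w ↦ ?_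
  have hslice : ContDiff ℝ 1 fun x ↦ g (w, x) := hg.comp (contDiff_prodMk_right w)
  have hslice_c : HasCompactSupport fun x ↦ g (w, x) := hasCompactSupport_slice_right hc w
  have hslice_int : Integrable fun x ↦ g (w, x) :=
    hslice.continuous.integrable_of_hasCompactSupport hslice_c
  have hfderiv_int : Integrable (fderiv ℝ fun x ↦ g (w, x)) :=
    (hslice.continuous_fderiv one_ne_zero).integrable_of_hasCompactSupport (hslice_c.fderiv ℝ)
  calc dbar (partialFourier g ξ) w
      = 𝓕 (fun x ↦ ∑ i, dbar (φ i) w • fderiv ℝ (fun x ↦ g (w, x)) x (e i)) ξ := by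
        simp only [dbar_partialFourier hg hc, h]
    _ = ∑ i, dbar (φ i) w • 𝓕 (fun x ↦ fderiv ℝ (fun x ↦ g (w, x)) x (e i)) ξ :=
        fourier_sum_const_smul _ (fun i ↦ hfderiv_int.apply_continuousLinearMap (e i)) ξ
    _ = ∑ i, dbar (φ i) w • (2 * Real.pi * I * ⟪e i, ξ⟫) • partialFourier g ξ w := by
        simp only [fourier_fderiv_apply hslice_int (hslice.differentiable one_ne_zero) hfderiv_int,
          partialFourier]
    _ = dbar (fun w ↦ ∑ i, 2 * Real.pi * I * ⟪e i, ξ⟫ * φ i w) w • partialFourier g ξ w := by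
        rw [dbar_sum_const_mul _ fun i ↦ hφ i w, sum_smul]
        simp only [smul_smul, mul_comm]

end PartialFourier

section Quadric

variable {n d : ℕ}

theorem wbarQ_eq_dbar {u : (Fin n → ℂ) × (Fin d → ℝ) → ℂ} (hu : Differentiable ℝ u) (j : Fin n)
    (z : Fin n → ℂ) (w : ℂ) (x : Fin d → ℝ) :
    wbarQ j u (Function.update z j w, x) = dbar (fun w ↦ u (Function.update z j w, x)) w := by
  have hline : HasFDerivAt (fun w ↦ (Function.update z j w, x))
      ((ContinuousLinearMap.pi (Pi.single j (.id ℝ ℂ))).prod 0) w :=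
    (hasFDerivAt_update z w).prodMk (hasFDerivAt_const x w)
  have hsingle (v : ℂ) :
      ContinuousLinearMap.pi (Pi.single j (.id ℝ ℂ) : Fin n → ℂ →L[ℝ] ℂ) v = Pi.single j v := by
    ext k
    obtain rfl | hk := eq_or_ne k j <;> simp [*]
  have hslice (v : ℂ) : fderiv ℝ (fun w ↦ u (Function.update z j w, x)) w v
      = fderiv ℝ u (Function.update z j w, x) (Pi.single j v, 0) := by
    rw [fderiv_fun_comp w (hu _) hline.differentiableAt, hline.fderiv,
      ContinuousLinearMap.comp_apply, ContinuousLinearMap.prod_apply, hsingle, zero_apply]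
  simp only [wbarQ, dbar, hslice, smul_eq_mul]

theorem dxQ_eq_fderiv {u : (Fin n → ℂ) × (Fin d → ℝ) → ℂ} (hu : Differentiable ℝ u) (ℓ : Fin d)
    (z : Fin n → ℂ) (x : EuclideanSpace ℝ (Fin d)) :
    dxQ ℓ u (z, x.ofLp)
      = fderiv ℝ (fun x : EuclideanSpace ℝ (Fin d) ↦ u (z, x.ofLp)) x (.single ℓ 1) := by
  have hline : HasFDerivAt (fun x : EuclideanSpace ℝ (Fin d) ↦ (z, x.ofLp))
      ((0 : EuclideanSpace ℝ (Fin d) →L[ℝ] Fin n → ℂ).prod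
        (EuclideanSpace.equiv (Fin d) ℝ).toContinuousLinearMap) x :=
    (hasFDerivAt_const z x).prodMk (EuclideanSpace.equiv (Fin d) ℝ).hasFDerivAt
  rw [fderiv_fun_comp x (hu _) hline.differentiableAt, hline.fderiv]
  rfl

theorem no_compactly_supported_CR_functions_general_general
    (H : Fin d → Matrix (Fin n) (Fin n) ℂ) (j : Fin n) {u : (Fin n → ℂ) × (Fin d → ℝ) → ℂ}
    (hu : ContDiff ℝ 1 u) (hc : HasCompactSupport u) (hCR : ∀ p, LbarQ H j u p = 0) : u = 0 := by
  have hdiff : Differentiable ℝ u := hu.differentiable one_ne_zero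
  funext ⟨z, x⟩
  let slice : ℂ × EuclideanSpace ℝ (Fin d) → (Fin n → ℂ) × (Fin d → ℝ) :=
    Prod.map (Function.update z j) WithLp.ofLp
  have hslice : ContDiff ℝ 1 slice := (contDiff_update 1 z j).prodMap PiLp.contDiff_ofLp
  have hslice_closed : Topology.IsClosedEmbedding slice :=
    (isClosedEmbedding_update z j).prodMap
      (EuclideanSpace.equiv (Fin d) ℝ).toHomeomorph.isClosedEmbedding
  let a (ℓ : Fin d) (w : ℂ) : ℂ := I * ∑ k, H ℓ k j * Function.update z j w k
  have ha (ℓ : Fin d) : Differentiable ℂ (a ℓ) := by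
    have hupdate : Differentiable ℂ (Function.update z j) :=
      (contDiff_update 1 z j).differentiable one_ne_zero
    fun_prop
  have hzero : u ∘ slice = 0 := by
    refine eq_zero_of_dbar_eq_sum_smul_fderiv (φ := fun ℓ w ↦ a ℓ w * starRingEnd ℂ w)
      (hu.comp hslice) (hc.comp_isClosedEmbedding hslice_closed)
      (fun ℓ ↦ (ha ℓ).restrictScalars ℝ |>.mul conjCLE.differentiable)
      (fun ℓ ↦ EuclideanSpace.single ℓ 1) fun w x ↦ ?_
    simp only [Function.comp_apply, slice, Prod.map_apply, dbar_mul_conj (ha _ w),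
      ← wbarQ_eq_dbar hdiff, ← dxQ_eq_fderiv hdiff]
    rw [sub_eq_zero.1 (hCR (Function.update z j w, x.ofLp))]
    simp only [a, mul_sum, sum_mul, smul_eq_mul, mul_assoc]
  simpa [slice] using congrFun hzero (z j, WithLp.toLp 2 x)

end Quadric

theorem no_compactly_supported_CR_functions_general (n d : ℕ) (hn : 4 ≤ n) (hd : 1 ≤ d)
    (H : Fin d → Matrix (Fin n) (Fin n) ℂ)
    (hH : ∀ ℓ, (H ℓ).IsHermitian) (hpc : TwoPseudoconcave H)
    (u : (Fin n → ℂ) × (Fin d → ℝ) → ℂ)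
    (hu : ContDiff ℝ (⊤ : ℕ∞) u) (hucs : HasCompactSupport u)
    (hCR : ∀ (j : Fin n) (p : (Fin n → ℂ) × (Fin d → ℝ)), LbarQ H j u p = 0) :
    u = 0 :=
  no_compactly_supported_CR_functions_general_general H ⟨0, by omega⟩
    (hu.of_le (by exact_mod_cast le_top)) hucs (hCR _)
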